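/- For the weight vector w given in the context: (i) for each of the 270 trinomial generators f of I_X, the initial form in_w(f) is not a monomial; and (ii) the monomial E₆·F₅₆·G₆ belongs to the initial ideal in_w(I_X). Consequently w lies in the tropical prevariety of the 270 trinomial generators but not in the tropical variety of I_X, so the 270 trinomial generators of the Cox ring ideal of a generic smooth cubic surface are not a tropical basis (Theorem 3.2, disproving Conjecture 5.3 of [RSS16]). -/

import Mathlib

open MvPolynomial

noncomputable section

/-- The `w`-weight `⟨w, m⟩` of an exponent vector / monomial `m`. -/
def mWeight {σ : Type*} (w : σ → ℝ) (m : σ →₀ ℕ) : ℝ :=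
  m.sum fun i e => w i * e

/-- The initial form `in_w(f)`: the sum of the terms of `f` whose `w`-weight is
minimal among all terms of `f` (min-convention, trivial valuation). -/
def initialForm {σ K : Type*} [CommRing K] (w : σ → ℝ) (f : MvPolynomial σ K) :
    MvPolynomial σ K :=
  (f.support.filter fun m => ∀ m' ∈ f.support, mWeight w m ≤ mWeight w m').sum
    fun m => monomial m (f.coeff m)

/-- A polynomial is a monomial if it equals `c · x^m` for a single exponent
vector `m` and a nonzero coefficient `c`. -/
def IsMonomial {σ K : Type*} [CommRing K] (f : MvPolynomial σ K) : Prop :=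
  ∃ (m : σ →₀ ℕ) (c : K), c ≠ 0 ∧ f = monomial m c

/-- The initial ideal `in_w(I)`: the ideal generated by the initial forms of
all nonzero elements of `I`. -/
def initialIdeal {σ K : Type*} [CommRing K] (w : σ → ℝ)
    (I : Ideal (MvPolynomial σ K)) : Ideal (MvPolynomial σ K) :=
  Ideal.span {g | ∃ h ∈ I, h ≠ 0 ∧ g = initialForm w h}


/-! ### The Cox ring of a smooth cubic surface

The base field is `K = ℚ(d₁,…,d₆)` (generic parameters), and the polynomial
ring has the 27 variables `E₁,…,E₆`, `F_{ij}` (for unordered pairs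
`{i,j} ⊆ {1,…,6}`), `G₁,…,G₆`, indexed by `Fin 6` (so indices are shifted
down by one). -/

/-- The field `ℚ(d₁,…,d₆)` of rational functions in six variables. -/
abbrev KK : Type := FractionRing (MvPolynomial (Fin 6) ℚ)

/-- The parameter `d_i` as an element of `ℚ(d₁,…,d₆)`. -/
def dK (i : Fin 6) : KK := algebraMap (MvPolynomial (Fin 6) ℚ) KK (X i)

/-- Index type for the 27 variables: `Sum.inl i` is `E_i`, `Sum.inr (Sum.inl s)`
is `F_{ij}` for the unordered (off-diagonal) pair `s = {i,j}`, and
`Sum.inr (Sum.inr i)` is `G_i`. -/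
def CVar : Type :=
  Fin 6 ⊕ ({s : Sym2 (Fin 6) // ¬ s.IsDiag} ⊕ Fin 6)

/-- The variable `E_i`. -/
def Ev (i : Fin 6) : MvPolynomial CVar KK := X (Sum.inl i)

/-- The variable `F_{ij}` (junk value `0` when `i = j`). -/
def Fv (i j : Fin 6) : MvPolynomial CVar KK :=
  if h : ¬ (s(i, j) : Sym2 (Fin 6)).IsDiag
  then X (Sum.inr (Sum.inl ⟨s(i, j), h⟩)) else 0

/-- The variable `G_i`. -/
def Gv (i : Fin 6) : MvPolynomial CVar KK := X (Sum.inr (Sum.inr i))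

/-- The trinomial
`T_{i,jkl} = (d_k−d_l)(d_i+d_k+d_l) E_j F_{ij} − (d_j−d_l)(d_i+d_j+d_l) E_k F_{ik}
 + (d_j−d_k)(d_i+d_j+d_k) E_l F_{il}`. -/
def T (i j k l : Fin 6) : MvPolynomial CVar KK :=
  C ((dK k - dK l) * (dK i + dK k + dK l)) * (Ev j * Fv i j) -
    C ((dK j - dK l) * (dK i + dK j + dK l)) * (Ev k * Fv i k) +
    C ((dK j - dK k) * (dK i + dK j + dK k)) * (Ev l * Fv i l)

/-- The weight vector `w` from the paper (Theorem on cubic surfaces):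
`E = (2,1,0,1,1,1)`, `F₁₃ = 2`, `F₂₃ = F₃₄ = F₃₅ = F₃₆ = 1`, all remaining
`F`- and `G`-weights `0` (indices shifted down by one). -/
def wCox : CVar → ℝ
  | Sum.inl i => ![2, 1, 0, 1, 1, 1] i
  | Sum.inr (Sum.inl s) =>
      if s.val = s(0, 2) then 2
      else if s.val = s(1, 2) ∨ s.val = s(2, 3) ∨ s.val = s(2, 4) ∨ s.val = s(2, 5)
      then 1 else 0
  | Sum.inr (Sum.inr _) => 0

/-! ### Pinning down the 270 trinomial generators of `I_X`

The cubic surface `X` is the blow-up of `ℙ²` in the six points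
`p_i = (1 : d_i : d_i³)`.  The (saturated) Cox ideal is the kernel of the map
sending each of the 27 variables to the corresponding section, realized below
inside the fraction field of `K[x,y,z,t₁,…,t₆]`:
`E_i ↦ t_i`, `F_{ij} ↦ ℓ_{ij}/((d_j−d_i) t_i t_j)` (where `ℓ_{ij}` is the
equation of the line through `p_i, p_j`), and `G_i ↦ q_i / ∏_{m≠i} t_m`
(where `q_i` is the equation of the conic through the five points `p_m`,
`m ≠ i`).  The 270 trinomial generators of `I_X` (the ten trinomials
`T_{1,jkl}` together with their 260 translates under the Weyl group `W(E₆)`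
acting on the 27 lines) are exactly the trinomial relations supported on
three reducible members of one of the 27 conic bundle classes; below they are
characterized as: elements of the kernel which are sums of three terms, each
a product of two distinct variables, all three of the same `ℤ⁷`-multidegree
(for the Picard grading `deg E_i = e_i`, `deg F_{ij} = e₀−e_i−e_j`,
`deg G_i = 2e₀−∑_{j≠i} e_j`). -/

/-- Auxiliary polynomial ring `K[x,y,z,t₁,…,t₆]` (variables `0,1,2` are
`x,y,z`; variable `3+i` is `t_i`). -/
abbrev SRing : Type := MvPolynomial (Fin 9) KK

/-- Its fraction field. -/
abbrev LF : Type := FractionRing SRing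

/-- The coordinates `x, y, z` in `LF`. -/
def xL (a : Fin 3) : LF := algebraMap SRing LF (X (a.castLE (by omega)))

/-- The variables `t_i` in `LF`. -/
def tL (i : Fin 6) : LF := algebraMap SRing LF (X (i.addNat 3))

/-- The parameter `d_i` in `LF`. -/
def dL (i : Fin 6) : LF := algebraMap SRing LF (C (dK i))

/-- The linear form `ℓ_{ij}` cutting out the line through
`p_i = (1:d_i:d_i³)` and `p_j = (1:d_j:d_j³)`. -/
def ellL (i j : Fin 6) : LF :=
  Matrix.det !![xL 0, xL 1, xL 2; 1, dL i, dL i ^ 3; 1, dL j, dL j ^ 3]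

/-- The `r`-th element (in increasing order) of `{1,…,6} ∖ {i}`. -/
def cpl (i : Fin 6) (r : Fin 5) : Fin 6 :=
  ((Finset.univ.erase i).orderIsoOfFin
    (by rw [Finset.card_erase_of_mem (Finset.mem_univ i)]; simp) r).val

/-- The quadratic form `q_i` cutting out the conic through the five points
`p_m = (1:d_m:d_m³)`, `m ≠ i` (a 6×6 determinant in the conic monomials). -/
def conicL (i : Fin 6) : LF :=
  Matrix.det (Matrix.of fun r c : Fin 6 =>
    Fin.cases
      (![xL 0 ^ 2, xL 0 * xL 1, xL 1 ^ 2, xL 0 * xL 2, xL 1 * xL 2, xL 2 ^ 2] c)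
      (fun r' =>
        ![1, dL (cpl i r'), dL (cpl i r') ^ 2, dL (cpl i r') ^ 3,
          dL (cpl i r') ^ 4, dL (cpl i r') ^ 6] c)
      r)

/-- The realization map: its kernel is the (saturated) Cox ideal of `X`. -/
def phiC : MvPolynomial CVar KK →ₐ[KK] LF :=
  aeval fun v => match v with
    | Sum.inl i => tL i
    | Sum.inr (Sum.inl s) =>
        ellL s.val.inf s.val.sup /
          ((dL s.val.sup - dL s.val.inf) * (tL s.val.inf * tL s.val.sup))
    | Sum.inr (Sum.inr i) => conicL i / ∏ m ∈ Finset.univ.erase i, tL m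

/-- The `ℤ⁷`-multidegree (Picard grading) of the 27 variables. -/
def picDeg : CVar → Fin 7 → ℤ
  | Sum.inl i => Pi.single i.succ 1
  | Sum.inr (Sum.inl s) =>
      Pi.single 0 1 - Pi.single (Fin.succ s.val.inf) 1 -
        Pi.single (Fin.succ s.val.sup) 1
  | Sum.inr (Sum.inr i) =>
      (Pi.single 0 2 + Pi.single i.succ 1) - ∑ j : Fin 6, Pi.single (Fin.succ j) 1

/-- The `ℤ⁷`-multidegree of a monomial (exponent vector). -/
def picDegM (m : CVar →₀ ℕ) : Fin 7 → ℤ :=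
  ∑ v ∈ m.support, (m v : ℤ) • picDeg v

/-- Off-diagonal pair variable. -/
def fvar (i j : Fin 6) (h : ¬ (s(i, j) : Sym2 (Fin 6)).IsDiag) : CVar :=
  Sum.inr (Sum.inl ⟨s(i, j), h⟩)

def evar (i : Fin 6) : CVar := Sum.inl i
def gvar (i : Fin 6) : CVar := Sum.inr (Sum.inr i)

/-- Numbering of the 27 variables. -/
def nm : Fin 27 → CVar :=
  ![evar 0, evar 1, evar 2, evar 3, evar 4, evar 5,
    fvar 0 1 (by decide), fvar 0 2 (by decide), fvar 0 3 (by decide), fvar 0 4 (by decide),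
    fvar 0 5 (by decide), fvar 1 2 (by decide), fvar 1 3 (by decide), fvar 1 4 (by decide),
    fvar 1 5 (by decide), fvar 2 3 (by decide), fvar 2 4 (by decide), fvar 2 5 (by decide),
    fvar 3 4 (by decide), fvar 3 5 (by decide), fvar 4 5 (by decide),
    gvar 0, gvar 1, gvar 2, gvar 3, gvar 4, gvar 5]

lemma fvar_surj_lt (a b : Fin 6) (hab : a < b) (h : ¬ (s(a, b) : Sym2 (Fin 6)).IsDiag) :
    ∃ i, nm i = fvar a b h := by
  refine ⟨Fin.ofNat 27 (6 + (a.val * (11 - a.val) / 2 + b.val - a.val - 1)), ?_⟩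
  fin_cases a <;> fin_cases b <;> first | rfl | (exfalso; revert hab; decide)

lemma fvar_surj (a b : Fin 6) (h : ¬ (s(a, b) : Sym2 (Fin 6)).IsDiag) :
    ∃ i, nm i = fvar a b h := by
  rcases lt_trichotomy a b with hab | hab | hab
  · exact fvar_surj_lt a b hab h
  · exact absurd (by simp [hab]) h
  · obtain ⟨i, hi⟩ := fvar_surj_lt b a hab (by rwa [Sym2.eq_swap])
    refine ⟨i, hi.trans ?_⟩
    unfold fvar
    congr 3
    exact Sym2.eq_swap

lemma nm_surj (v : CVar) : ∃ i, nm i = v := by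
  rcases v with i | ⟨s, h⟩ | i
  · exact ⟨![0, 1, 2, 3, 4, 5] i, by fin_cases i <;> rfl⟩
  · induction s using Sym2.ind with
    | _ a b =>
      exact fvar_surj a b h
  · exact ⟨![21, 22, 23, 24, 25, 26] i, by fin_cases i <;> rfl⟩

/-- A linear functional on the Picard lattice, shifted to be positive on the 27 classes. -/
def enc (p : Fin 7 → ℤ) : ℤ :=
  1000000 * p 0 + 100000 * p 1 + 10000 * p 2 + 1000 * p 3 + 100 * p 4 + 10 * p 5 + p 6

lemma enc_add (p q : Fin 7 → ℤ) : enc (p + q) = enc p + enc q := by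
  simp only [enc, Pi.add_apply]; ring

/-- table of codes -/
def codeT : List ℕ := [100000, 10000, 1000, 100, 10, 1, 890000, 899000, 899900, 899990, 899999, 989000, 989900, 989990, 989999, 998900, 998990, 998999, 999890, 999899, 999989, 1988889, 1898889, 1889889, 1888989, 1888899, 1888890]

def ct (i : ℕ) : ℕ := codeT.getD i 0

lemma enc_nm : ∀ i : Fin 27, enc (picDeg (nm i)) = (ct i : ℤ) := by
  decide +kernel

def pairsL : List (ℕ × ℕ) :=
  (List.range 27).flatMap fun j => (List.range j).map fun i => (i, j)

def triN (c : ℕ) : List (ℕ × ℕ) :=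
  pairsL.filter fun p => Nat.beq (ct p.1 + ct p.2 + ct c) 2888889

def claimA : Bool :=
  pairsL.all fun p => 
    ((List.range 27).any fun c => Nat.beq (ct p.1 + ct p.2 + ct c) 2888889) ||
    (pairsL.all fun q => !(Nat.beq (ct p.1 + ct p.2) (ct q.1 + ct q.2)) || 
       (Nat.beq p.1 q.1 && Nat.beq p.2 q.2))

lemma claimA_true : claimA = true := by decide +kernel

lemma tri_card : ∀ c < 27, (triN c).length = 5 := by decide +kernel

/-- Table of the weights. -/
def wT : List ℕ := [2, 1, 0, 1, 1, 1, 0, 2, 0, 0, 0, 1, 0, 0, 0, 1, 1, 1, 0, 0, 0, 0, 0, 0, 0, 0, 0]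

def wt (i : ℕ) : ℕ := wT.getD i 0

lemma wCox_nm (i : Fin 27) : wCox (nm i) = (wt i : ℝ) := by
  fin_cases i <;> simp [wCox, nm, evar, gvar, fvar, wt, wT]

def nmN (i : ℕ) : CVar := nm (Fin.ofNat 27 i)

lemma enc_nmN {i : ℕ} (hi : i < 27) : enc (picDeg (nmN i)) = (ct i : ℤ) := by
  rw [nmN, enc_nm]; simp [Nat.mod_eq_of_lt hi]

lemma wCox_nmN {i : ℕ} (hi : i < 27) : wCox (nmN i) = (wt i : ℝ) := by
  rw [nmN, wCox_nm]; simp [Nat.mod_eq_of_lt hi]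

/-- The exponent vector of a product of two variables. -/
def mon (p : ℕ × ℕ) : CVar →₀ ℕ := Finsupp.single (nmN p.1) 1 + Finsupp.single (nmN p.2) 1

lemma mem_pairsL {p : ℕ × ℕ} : p ∈ pairsL ↔ p.1 < p.2 ∧ p.2 < 27 := by
  rcases p with ⟨a, b⟩
  simp only [pairsL, List.mem_flatMap, List.mem_range, List.mem_map, Prod.mk.injEq]
  constructor
  · rintro ⟨j, hj, i, hi, rfl, rfl⟩; exact ⟨hi, hj⟩
  · rintro ⟨h1, h2⟩; exact ⟨b, h2, a, h1, rfl, rfl⟩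

lemma exists_pair {u v : CVar} (h : u ≠ v) :
    ∃ p ∈ pairsL, Finsupp.single u 1 + Finsupp.single v 1 = mon p := by
  obtain ⟨i, rfl⟩ := nm_surj u
  obtain ⟨j, rfl⟩ := nm_surj v
  have hi : Fin.ofNat 27 i.val = i := by ext; simp
  have hj : Fin.ofNat 27 j.val = j := by ext; simp
  rcases lt_trichotomy i j with hij | hij | hij
  · exact ⟨(i, j), mem_pairsL.2 ⟨hij, j.2⟩, by simp only [mon, nmN, hi, hj]⟩
  · exact absurd (by rw [hij]) h
  · exact ⟨(j, i), mem_pairsL.2 ⟨hij, i.2⟩, by simp only [mon, nmN, hi, hj]; rw [add_comm]⟩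

lemma picDegM_eq (m : CVar →₀ ℕ) : picDegM m = m.sum fun v n => (n : ℤ) • picDeg v := rfl

lemma enc_mon {p : ℕ × ℕ} (hp : p ∈ pairsL) :
    enc (picDegM (mon p)) = ((ct p.1 + ct p.2 : ℕ) : ℤ) := by
  obtain ⟨h1, h2⟩ := mem_pairsL.1 hp
  rw [picDegM_eq, mon, Finsupp.sum_add_index' (by simp) (by intros; simp [add_smul]),
    Finsupp.sum_single_index (by simp), Finsupp.sum_single_index (by simp)]
  simp [enc_add, enc_nmN h2, enc_nmN (h1.trans h2)]

lemma mWeight_add {σ : Type*} (w : σ → ℝ) (m n : σ →₀ ℕ) :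
    mWeight w (m + n) = mWeight w m + mWeight w n := by
  unfold mWeight
  exact Finsupp.sum_add_index' (by simp) (by intros; push_cast; ring)

lemma mWeight_single {σ : Type*} (w : σ → ℝ) (v : σ) :
    mWeight w (Finsupp.single v 1) = w v := by
  simp [mWeight]

lemma mWeight_mon {p : ℕ × ℕ} (hp : p ∈ pairsL) :
    mWeight wCox (mon p) = ((wt p.1 + wt p.2 : ℕ) : ℝ) := by
  obtain ⟨h1, h2⟩ := mem_pairsL.1 hp
  rw [mon, mWeight_add, mWeight_single, mWeight_single, wCox_nmN h2, wCox_nmN (h1.trans h2)]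
  push_cast; rfl

lemma mem_triN {c : ℕ} {p : ℕ × ℕ} :
    p ∈ triN c ↔ p ∈ pairsL ∧ ct p.1 + ct p.2 + ct c = 2888889 := by
  simp [triN]

lemma claimA_use {p : ℕ × ℕ} (hp : p ∈ pairsL) :
    (∃ c < 27, ct p.1 + ct p.2 + ct c = 2888889) ∨
    (∀ q ∈ pairsL, ct p.1 + ct p.2 = ct q.1 + ct q.2 → p = q) := by
  have h := List.all_eq_true.1 claimA_true p hp
  rcases Bool.or_eq_true_iff.1 h with h | h
  · left
    obtain ⟨c, hc, h⟩ := List.any_eq_true.1 h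
    exact ⟨c, List.mem_range.1 hc, Nat.eq_of_beq_eq_true h⟩
  · right
    intro q hq he
    have h := List.all_eq_true.1 h q hq
    rcases Bool.or_eq_true_iff.1 h with h | h
    · simp [he] at h
    · have := Bool.and_eq_true_iff.1 h
      exact Prod.ext (Nat.eq_of_beq_eq_true this.1) (Nat.eq_of_beq_eq_true this.2)

lemma supp_class {g : MvPolynomial CVar KK} (h3 : g.support.card = 3)
    (hquad : ∀ m ∈ g.support,
      ∃ u v : CVar, u ≠ v ∧ m = Finsupp.single u 1 + Finsupp.single v 1)
    (hdeg : ∀ m ∈ g.support, ∀ m' ∈ g.support, picDegM m = picDegM m') :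
    ∃ c < 27, ∀ m ∈ g.support, ∃ p ∈ triN c, mon p = m := by
  have hP : ∀ m ∈ g.support, ∃ p ∈ pairsL, mon p = m := by
    intro m hm
    obtain ⟨u, v, huv, rfl⟩ := hquad m hm
    obtain ⟨p, hp, h⟩ := exists_pair huv
    exact ⟨p, hp, h.symm⟩
  obtain ⟨m, hm⟩ : g.support.Nonempty := by rw [← Finset.card_pos]; omega
  obtain ⟨p, hp, rfl⟩ := hP m hm
  have hS : ∀ q ∈ pairsL, mon q ∈ g.support → ct p.1 + ct p.2 = ct q.1 + ct q.2 := by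
    intro q hq hqs
    have := congrArg enc (hdeg _ hm _ hqs)
    rw [enc_mon hp, enc_mon hq] at this
    exact_mod_cast this
  rcases claimA_use hp with ⟨c, hc, h⟩ | h
  · refine ⟨c, hc, fun m' hm' => ?_⟩
    obtain ⟨q, hq, rfl⟩ := hP m' hm'
    exact ⟨q, mem_triN.2 ⟨hq, by rw [← hS q hq hm', h]⟩, rfl⟩
  · exfalso
    have : g.support ⊆ {mon p} := by
      intro m' hm'
      obtain ⟨q, hq, rfl⟩ := hP m' hm'
      rw [h q hq (hS q hq hm')]; simp
    have := Finset.card_le_card this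
    simp at this
    omega

lemma claimB : ∀ c < 27, ∀ p ∈ triN c, ∀ q ∈ triN c, ∀ r ∈ triN c,
    wt p.1 + wt p.2 < wt q.1 + wt q.2 → wt p.1 + wt p.2 < wt r.1 + wt r.2 → q = r := by
  decide +kernel

lemma coeff_initialForm {σ K : Type*} [CommRing K] (w : σ → ℝ) (f : MvPolynomial σ K)
    {m : σ →₀ ℕ} (hm : m ∈ f.support) (h : ∀ m' ∈ f.support, mWeight w m ≤ mWeight w m') :
    (initialForm w f).coeff m = f.coeff m := by
  classical
  unfold initialForm
  rw [coeff_sum, Finset.sum_eq_single m]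
  · simp
  · intro b _ hb; simp [coeff_monomial, hb]
  · intro h'; exact absurd (Finset.mem_filter.2 ⟨hm, h⟩) h'

lemma part_one {g : MvPolynomial CVar KK} (h3 : g.support.card = 3)
    (hquad : ∀ m ∈ g.support,
      ∃ u v : CVar, u ≠ v ∧ m = Finsupp.single u 1 + Finsupp.single v 1)
    (hdeg : ∀ m ∈ g.support, ∀ m' ∈ g.support, picDegM m = picDegM m') :
    ¬ IsMonomial (initialForm wCox g) := by
  classical
  obtain ⟨c, hc, hcl⟩ := supp_class h3 hquad hdeg
  rintro ⟨m₀, a, ha, hm₀⟩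
  have huniq : ∀ m ∈ g.support, (∀ m' ∈ g.support, mWeight wCox m ≤ mWeight wCox m') →
      m = m₀ := by
    intro m hm h
    have := coeff_initialForm wCox g hm h
    rw [hm₀, coeff_monomial] at this
    by_contra hne
    rw [if_neg (Ne.symm hne)] at this
    exact (mem_support_iff.1 hm) this.symm
  obtain ⟨m, hm, hmin⟩ := Finset.exists_min_image g.support (mWeight wCox)
    (by rw [← Finset.card_pos]; omega)
  have hm0 := huniq m hm hmin
  have hlt : ∀ m' ∈ g.support, m' ≠ m → mWeight wCox m < mWeight wCox m' := by
    intro m' hm' hne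
    refine lt_of_le_of_ne (hmin m' hm') fun he => hne ?_
    rw [hm0]
    exact huniq m' hm' (fun x hx => he ▸ hmin x hx)
  have hcard : (g.support.erase m).card = 2 := by rw [Finset.card_erase_of_mem hm]; omega
  obtain ⟨x, y, hxy, hE⟩ := Finset.card_eq_two.1 hcard
  have hx : x ∈ g.support.erase m := by rw [hE]; simp
  have hy : y ∈ g.support.erase m := by rw [hE]; simp
  rw [Finset.mem_erase] at hx hy
  obtain ⟨p, hp, rfl⟩ := hcl m hm
  obtain ⟨q, hq, rfl⟩ := hcl x hx.2
  obtain ⟨r, hr, rfl⟩ := hcl y hy.2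
  have h1 := hlt _ hx.2 hx.1
  have h2 := hlt _ hy.2 hy.1
  rw [mWeight_mon (mem_triN.1 hp).1, mWeight_mon (mem_triN.1 hq).1] at h1
  rw [mWeight_mon (mem_triN.1 hp).1, mWeight_mon (mem_triN.1 hr).1] at h2
  exact hxy (congrArg mon (claimB c hc p hp q hq r hr (by exact_mod_cast h1)
    (by exact_mod_cast h2)))

open Classical in
/-- The family of the 270 possible supports. -/
def suppFam : Finset (Finset (CVar →₀ ℕ)) :=
  (Finset.range 27).biUnion fun c =>
    ((triN c).toFinset.powersetCard 3).image fun t => t.image mon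

lemma suppFam_card : suppFam.card ≤ 270 := by
  classical
  unfold suppFam
  refine Finset.card_biUnion_le.trans ?_
  have : ∀ c ∈ Finset.range 27, (((triN c).toFinset.powersetCard 3).image
      fun t => t.image mon).card ≤ 10 := by
    intro c hc
    refine Finset.card_image_le.trans ?_
    rw [Finset.card_powersetCard]
    have h5 : (triN c).toFinset.card ≤ 5 :=
      (List.toFinset_card_le _).trans (tri_card c (Finset.mem_range.1 hc)).le
    exact (Nat.choose_le_choose 3 h5).trans (by decide)
  refine (Finset.sum_le_sum this).trans ?_
  simp

lemma supp_mem_fam {g : MvPolynomial CVar KK} (h3 : g.support.card = 3)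
    (hquad : ∀ m ∈ g.support,
      ∃ u v : CVar, u ≠ v ∧ m = Finsupp.single u 1 + Finsupp.single v 1)
    (hdeg : ∀ m ∈ g.support, ∀ m' ∈ g.support, picDegM m = picDegM m') :
    g.support ∈ suppFam := by
  classical
  obtain ⟨c, hc, hcl⟩ := supp_class h3 hquad hdeg
  choose! P hP hPm using hcl
  unfold suppFam
  rw [Finset.mem_biUnion]
  refine ⟨c, Finset.mem_range.2 hc, Finset.mem_image.2 ⟨g.support.image P, ?_, ?_⟩⟩
  · rw [Finset.mem_powersetCard]
    constructor
    · intro p hp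
      obtain ⟨m, hm, rfl⟩ := Finset.mem_image.1 hp
      exact List.mem_toFinset.2 (hP m hm)
    · rw [Finset.card_image_of_injOn, h3]
      intro m hm m' hm' h
      rw [← hPm m hm, ← hPm m' hm', h]
  · rw [Finset.image_image]
    ext m
    simp only [Finset.mem_image, Function.comp]
    constructor
    · rintro ⟨m', hm', rfl⟩; rw [hPm m' hm']; exact hm'
    · intro hm; exact ⟨m, hm, hPm m hm⟩

/-- The `i`-th variable. -/
def V (i : ℕ) : MvPolynomial CVar KK := X (nmN i)

lemma monomial_mon (p : ℕ × ℕ) (a : KK) : monomial (mon p) a = C a * (V p.1 * V p.2) := by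
  rw [mon, V, V, X, X, monomial_mul, C_mul_monomial]; simp

lemma exists_trinomial (G : Finset (MvPolynomial CVar KK))
    (hcard : G.card = 270)
    (hsupp : ∀ g ∈ G, g.support.card = 3)
    (hquad : ∀ g ∈ G, ∀ m ∈ g.support,
      ∃ u v : CVar, u ≠ v ∧ m = Finsupp.single u 1 + Finsupp.single v 1)
    (hdeg : ∀ g ∈ G, ∀ m ∈ g.support, ∀ m' ∈ g.support, picDegM m = picDegM m')
    (hdistinct : ∀ g ∈ G, ∀ g' ∈ G, g ≠ g' → g.support ≠ g'.support)
    (p q r : ℕ × ℕ) (hpq : p ≠ q) (hpr : p ≠ r) (hqr : q ≠ r)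
    (hc : ∃ c < 27, p ∈ triN c ∧ q ∈ triN c ∧ r ∈ triN c) :
    ∃ a b : KK, a ≠ 0 ∧ b ≠ 0 ∧
      V p.1 * V p.2 - C a * (V q.1 * V q.2) - C b * (V r.1 * V r.2) ∈
        Ideal.span (G : Set (MvPolynomial CVar KK)) := by
  classical
  have himg : G.image support = suppFam := by
    apply Finset.eq_of_subset_of_card_le
    · intro s hs
      obtain ⟨g, hg, rfl⟩ := Finset.mem_image.1 hs
      exact supp_mem_fam (hsupp g hg) (hquad g hg) (hdeg g hg)
    · rw [Finset.card_image_of_injOn, hcard]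
      · exact suppFam_card
      · intro g hg g' hg' h
        by_contra hne
        exact hdistinct g hg g' hg' hne h
  obtain ⟨c, hc, hp, hq, hr⟩ := hc
  have hmem : ({mon p, mon q, mon r} : Finset (CVar →₀ ℕ)) ∈ suppFam := by
    unfold suppFam
    rw [Finset.mem_biUnion]
    refine ⟨c, Finset.mem_range.2 hc, Finset.mem_image.2 ⟨{p, q, r}, ?_, ?_⟩⟩
    · rw [Finset.mem_powersetCard]
      refine ⟨?_, Finset.card_eq_three.2 ⟨p, q, r, hpq, hpr, hqr, rfl⟩⟩
      intro x hx
      simp only [Finset.mem_insert, Finset.mem_singleton] at hx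
      rw [List.mem_toFinset]
      rcases hx with rfl | rfl | rfl <;> assumption
    · simp [Finset.image_insert]
  rw [← himg] at hmem
  obtain ⟨g, hg, hgs⟩ := Finset.mem_image.1 hmem
  have h3 := hsupp g hg
  rw [hgs] at h3
  have hne1 : mon p ≠ mon q := by
    intro h; rw [h] at h3
    have := Finset.card_le_two (a := mon q) (b := mon r)
    simp at h3; omega
  have hne2 : mon p ≠ mon r := by
    intro h; rw [h] at h3
    have := Finset.card_le_two (a := mon q) (b := mon r)
    simp at h3; omega
  have hne3 : mon q ≠ mon r := by
    intro h; rw [h] at h3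
    have := Finset.card_le_two (a := mon p) (b := mon r)
    simp at h3; omega
  have hgsum : g = monomial (mon p) (g.coeff (mon p)) + (monomial (mon q) (g.coeff (mon q)) +
      monomial (mon r) (g.coeff (mon r))) := by
    conv_lhs => rw [g.as_sum, hgs]
    rw [Finset.sum_insert (by simp [hne1, hne2]), Finset.sum_insert (by simp [hne3]),
      Finset.sum_singleton]
  have cp : g.coeff (mon p) ≠ 0 := mem_support_iff.1 (by rw [hgs]; simp)
  have cq : g.coeff (mon q) ≠ 0 := mem_support_iff.1 (by rw [hgs]; simp)
  have cr : g.coeff (mon r) ≠ 0 := mem_support_iff.1 (by rw [hgs]; simp)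
  generalize g.coeff (mon p) = α at *
  generalize g.coeff (mon q) = β at *
  generalize g.coeff (mon r) = γ at *
  refine ⟨-(α⁻¹ * β), -(α⁻¹ * γ), by simp [*], by simp [*], ?_⟩
  have hgI : C α⁻¹ * g ∈ Ideal.span (G : Set (MvPolynomial CVar KK)) :=
    Ideal.mul_mem_left _ _ (Ideal.subset_span hg)
  convert hgI using 1
  rw [hgsum, monomial_mon, monomial_mon, monomial_mon]
  have : (C α⁻¹ * C α : MvPolynomial CVar KK) = 1 := by
    rw [← C_mul, inv_mul_cancel₀ cp, C_1]
  simp only [C_neg, C_mul]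
  linear_combination (-(V p.1 * V p.2)) * this

lemma initialForm_eq {σ K : Type*} [CommRing K] (w : σ → ℝ) (m₀ : σ →₀ ℕ) (κ : K)
    (hκ : κ ≠ 0) (r : MvPolynomial σ K)
    (hr : ∀ m ∈ r.support, mWeight w m₀ < mWeight w m) :
    monomial m₀ κ + r ≠ 0 ∧ initialForm w (monomial m₀ κ + r) = monomial m₀ κ := by
  classical
  have hm0 : m₀ ∉ r.support := fun h => lt_irrefl _ (hr _ h)
  have hc : (monomial m₀ κ + r).coeff m₀ = κ := by
    rw [coeff_add, notMem_support_iff.1 hm0]; simp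
  have hmem : m₀ ∈ (monomial m₀ κ + r).support := by rw [mem_support_iff, hc]; exact hκ
  have hle : ∀ m ∈ (monomial m₀ κ + r).support, m = m₀ ∨ mWeight w m₀ < mWeight w m := by
    intro m hm
    by_cases h : m = m₀
    · exact Or.inl h
    · right
      apply hr
      rw [mem_support_iff, coeff_add, coeff_monomial, if_neg (Ne.symm h), zero_add] at hm
      exact mem_support_iff.2 hm
  refine ⟨fun h => hκ (by rw [← hc, h]; simp), ?_⟩
  unfold initialForm
  have : ((monomial m₀ κ + r).support.filter fun m => ∀ m' ∈ (monomial m₀ κ + r).support,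
      mWeight w m ≤ mWeight w m') = {m₀} := by
    ext m
    simp only [Finset.mem_filter, Finset.mem_singleton]
    constructor
    · rintro ⟨h1, h2⟩
      rcases hle m h1 with h | h
      · exact h
      · exact absurd (h2 m₀ hmem) (not_le.2 h)
    · rintro rfl
      refine ⟨hmem, fun m' hm' => ?_⟩
      rcases hle m' hm' with h | h
      · rw [h]
      · exact h.le
  rw [this, Finset.sum_singleton, hc]

/-- exponent vector of a product of three variables -/
def mon3 (i j k : ℕ) : CVar →₀ ℕ := Finsupp.single (nmN i) 1 + Finsupp.single (nmN j) 1 +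
  Finsupp.single (nmN k) 1

lemma monomial_mon3 (i j k : ℕ) (a : KK) :
    monomial (mon3 i j k) a = C a * (V i * V j * V k) := by
  rw [mon3, V, V, V, X, X, X, monomial_mul, monomial_mul, C_mul_monomial]; simp

lemma mWeight_mon3 {i j k : ℕ} (hi : i < 27) (hj : j < 27) (hk : k < 27) :
    mWeight wCox (mon3 i j k) = ((wt i + wt j + wt k : ℕ) : ℝ) := by
  rw [mon3, mWeight_add, mWeight_add, mWeight_single, mWeight_single, mWeight_single,
    wCox_nmN hi, wCox_nmN hj, wCox_nmN hk]
  push_cast; rfl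

lemma part_two (G : Finset (MvPolynomial CVar KK))
    (hcard : G.card = 270)
    (hker : ∀ g ∈ G, phiC g = 0)
    (hsupp : ∀ g ∈ G, g.support.card = 3)
    (hquad : ∀ g ∈ G, ∀ m ∈ g.support,
      ∃ u v : CVar, u ≠ v ∧ m = Finsupp.single u 1 + Finsupp.single v 1)
    (hdeg : ∀ g ∈ G, ∀ m ∈ g.support, ∀ m' ∈ g.support, picDegM m = picDegM m')
    (hdistinct : ∀ g ∈ G, ∀ g' ∈ G, g ≠ g' → g.support ≠ g'.support)
    (hindep : ∀ x y : KK, phiC (V 7 * V 13 * V 18 - C x * (V 0 * V 9 * V 26) -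
      C y * (V 5 * V 16 * V 23)) ≠ 0) :
    V 5 * V 20 * V 26 ∈
      initialIdeal wCox (Ideal.span (G : Set (MvPolynomial CVar KK))) := by
  classical
  have key := exists_trinomial G hcard hsupp hquad hdeg hdistinct
  obtain ⟨α, β, hα, hβ, h1⟩ := key (16, 23) (20, 26) (9, 21) (by decide) (by decide) (by decide)
    (by decide +kernel)
  obtain ⟨γ, δ, hγ, hδ, h2⟩ := key (7, 18) (9, 15) (1, 26) (by decide) (by decide) (by decide)
    (by decide +kernel)
  obtain ⟨ε, ζ, hε, hζ, h3⟩ := key (13, 15) (0, 26) (5, 21) (by decide) (by decide) (by decide)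
    (by decide +kernel)
  obtain ⟨η, θ, hη, hθ, h4⟩ := key (1, 13) (0, 9) (5, 20) (by decide) (by decide) (by decide)
    (by decide +kernel)
  dsimp only at h1 h2 h3 h4
  set I := Ideal.span (G : Set (MvPolynomial CVar KK)) with hI
  have hβ' : (C β * C β⁻¹ : MvPolynomial CVar KK) = 1 := by
    rw [← C_mul, mul_inv_cancel₀ hβ, C_1]
  -- the combination
  have hh : V 7 * V 13 * V 18 - C (γ * ε + δ * η) * (V 0 * V 9 * V 26) -
      C (γ * ζ * β⁻¹) * (V 5 * V 16 * V 23) -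
      C (δ * θ - γ * ζ * β⁻¹ * α) * (V 5 * V 20 * V 26) ∈ I := by
    have e1 := I.mul_mem_left (C (γ * ζ * β⁻¹) * V 5) h1
    have e2 := I.mul_mem_left (V 13) h2
    have e3 := I.mul_mem_left (C γ * V 9) h3
    have e4 := I.mul_mem_left (C δ * V 26) h4
    have := I.sub_mem (I.add_mem (I.add_mem e2 e3) e4) e1
    convert this using 1
    simp only [C_mul, C_add, C_sub]
    linear_combination (-(C γ * C ζ * V 5 * V 9 * V 21)) * hβ'
  set κ := δ * θ - γ * ζ * β⁻¹ * α with hκdef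
  set x := γ * ε + δ * η
  set y := γ * ζ * β⁻¹
  have hIker : ∀ f ∈ I, phiC f = 0 := by
    intro f hf
    have : I ≤ RingHom.ker phiC := Ideal.span_le.2 fun g hg => hker g hg
    exact this hf
  have hκ : κ ≠ 0 := by
    intro h0
    apply hindep x y
    have := hIker _ hh
    rw [h0, C_0, zero_mul, sub_zero] at this
    exact this
  set r := monomial (mon3 7 13 18) (1 : KK) + monomial (mon3 0 9 26) (-x) +
    monomial (mon3 5 16 23) (-y) with hr
  have hrw : ∀ m ∈ r.support, mWeight wCox (mon3 5 20 26) < mWeight wCox m := by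
    intro m hm
    have hm' : m = mon3 7 13 18 ∨ m = mon3 0 9 26 ∨ m = mon3 5 16 23 := by
      by_contra! hne
      rw [mem_support_iff, hr] at hm
      apply hm
      simp [coeff_monomial, hne.1.symm, hne.2.1.symm, hne.2.2.symm]
    rcases hm' with rfl | rfl | rfl
    all_goals
      rw [mWeight_mon3 (by norm_num) (by norm_num) (by norm_num),
        mWeight_mon3 (by norm_num) (by norm_num) (by norm_num)]
      norm_num [wt, wT]
  obtain ⟨hne, hin⟩ := initialForm_eq wCox (mon3 5 20 26) (-κ) (neg_ne_zero.2 hκ) r hrw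
  have hmem : monomial (mon3 5 20 26) (-κ) + r ∈ I := by
    convert hh using 1
    rw [hr]
    simp only [monomial_mon3, C_neg, C_1]
    ring
  have hini : monomial (mon3 5 20 26) (-κ) ∈ initialIdeal wCox I :=
    Ideal.subset_span ⟨_, hmem, hne, hin.symm⟩
  have := (initialIdeal wCox I).mul_mem_left (C (-κ)⁻¹) hini
  rw [monomial_mon3, ← mul_assoc, ← C_mul, inv_mul_cancel₀ (neg_ne_zero.2 hκ), C_1,
    one_mul] at this
  exact this

/-! ### Linear independence of three sections -/

section Indep

variable {A B : Type*} [CommRing A] [CommRing B]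

def ellG (x : Fin 3 → A) (d : Fin 6 → A) (i j : Fin 6) : A :=
  Matrix.det !![x 0, x 1, x 2; 1, d i, d i ^ 3; 1, d j, d j ^ 3]

def conG (x : Fin 3 → A) (d : Fin 6 → A) (i : Fin 6) : A :=
  Matrix.det (Matrix.of fun r c : Fin 6 =>
    Fin.cases
      (![x 0 ^ 2, x 0 * x 1, x 1 ^ 2, x 0 * x 2, x 1 * x 2, x 2 ^ 2] c)
      (fun r' =>
        ![1, d (cpl i r'), d (cpl i r') ^ 2, d (cpl i r') ^ 3,
          d (cpl i r') ^ 4, d (cpl i r') ^ 6] c)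
      r)

lemma map_ellG (f : A →+* B) (x : Fin 3 → A) (d : Fin 6 → A) (i j : Fin 6) :
    f (ellG x d i j) = ellG (fun a => f (x a)) (fun a => f (d a)) i j := by
  simp [ellG, Matrix.det_fin_three]

lemma map_conG (f : A →+* B) (x : Fin 3 → A) (d : Fin 6 → A) (i : Fin 6) :
    f (conG x d i) = conG (fun a => f (x a)) (fun a => f (d a)) i := by
  rw [conG, RingHom.map_det, conG]
  congr 1
  ext r c
  refine Fin.cases ?_ (fun r' => ?_) r
  · fin_cases c <;> simp
  · fin_cases c <;> simp

def P1 (x : Fin 3 → A) (d : Fin 6 → A) : A := ellG x d 0 4 * conG x d 5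
def P2 (x : Fin 3 → A) (d : Fin 6 → A) : A := ellG x d 2 4 * conG x d 2
def P3 (x : Fin 3 → A) (d : Fin 6 → A) : A := ellG x d 0 2 * ellG x d 1 4 * ellG x d 3 4

lemma map_P1 (f : A →+* B) (x : Fin 3 → A) (d : Fin 6 → A) :
    f (P1 x d) = P1 (fun a => f (x a)) (fun a => f (d a)) := by
  rw [P1, map_mul, map_ellG, map_conG, P1]

lemma map_P2 (f : A →+* B) (x : Fin 3 → A) (d : Fin 6 → A) :
    f (P2 x d) = P2 (fun a => f (x a)) (fun a => f (d a)) := by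
  rw [P2, map_mul, map_ellG, map_conG, P2]

lemma map_P3 (f : A →+* B) (x : Fin 3 → A) (d : Fin 6 → A) :
    f (P3 x d) = P3 (fun a => f (x a)) (fun a => f (d a)) := by
  rw [P3, map_mul, map_mul, map_ellG, map_ellG, map_ellG, P3]

/-- The determinant of the values of the three cubics at the coordinate points. -/
def D3 (d : Fin 6 → A) : A :=
  (P1 ![0, 1, 0] d * P2 ![0, 0, 1] d - P2 ![0, 1, 0] d * P1 ![0, 0, 1] d) * P3 ![1, 0, 0] d
  - (P1 ![1, 0, 0] d * P2 ![0, 0, 1] d - P2 ![1, 0, 0] d * P1 ![0, 0, 1] d) * P3 ![0, 1, 0] d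
  + (P1 ![1, 0, 0] d * P2 ![0, 1, 0] d - P2 ![1, 0, 0] d * P1 ![0, 1, 0] d) * P3 ![0, 0, 1] d

lemma map_vec3 (f : A →+* B) (a b c : A) :
    (fun i => f ((![a, b, c] : Fin 3 → A) i)) = ![f a, f b, f c] := by
  ext i; fin_cases i <;> rfl

lemma map_D3 (f : A →+* B) (d : Fin 6 → A) : f (D3 d) = D3 (fun a => f (d a)) := by
  simp only [D3, map_add, map_sub, map_mul, map_P1, map_P2, map_P3, map_vec3, map_one, map_zero]

end Indep

lemma cpl_eq (i : Fin 6) (r : Fin 5) : cpl i r = i.succAbove r := by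
  have h : (Finset.univ.erase i).card = 5 := by
    rw [Finset.card_erase_of_mem (Finset.mem_univ i)]; simp
  have := Finset.orderEmbOfFin_unique h (f := i.succAbove)
    (fun x => Finset.mem_erase.2 ⟨Fin.succAbove_ne i x, Finset.mem_univ _⟩)
    (Fin.strictMono_succAbove i)
  rw [this]
  rfl

/-- Specialization of the parameters. -/
def dq : Fin 6 → ℚ := ![-1, 2, 3, -2, 1, 0]

lemma con5 (x : Fin 3 → ℚ) : conG x dq 5 = Matrix.det
    !![x 0 ^ 2, x 0 * x 1, x 1 ^ 2, x 0 * x 2, x 1 * x 2, x 2 ^ 2;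
      1, -1, 1, -1, 1, 1; 1, 2, 4, 8, 16, 64; 1, 3, 9, 27, 81, 729;
      1, -2, 4, -8, 16, 64; 1, 1, 1, 1, 1, 1] := by
  unfold conG
  congr 1
  ext r c
  have hd : ∀ r', dq (cpl 5 r') = (![-1, 2, 3, -2, 1] : Fin 5 → ℚ) r' := by
    intro r'; rw [cpl_eq]; fin_cases r' <;> rfl
  simp only [hd]
  refine Fin.cases ?_ (fun r' => ?_) r
  · fin_cases c <;> rfl
  · simp only [Matrix.of_apply, Fin.cases_succ]
    fin_cases r' <;> fin_cases c <;> simp <;> norm_num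

lemma con2 (x : Fin 3 → ℚ) : conG x dq 2 = Matrix.det
    !![x 0 ^ 2, x 0 * x 1, x 1 ^ 2, x 0 * x 2, x 1 * x 2, x 2 ^ 2;
      1, -1, 1, -1, 1, 1; 1, 2, 4, 8, 16, 64;
      1, -2, 4, -8, 16, 64; 1, 1, 1, 1, 1, 1; 1, 0, 0, 0, 0, 0] := by
  unfold conG
  congr 1
  ext r c
  have hd : ∀ r', dq (cpl 2 r') = (![-1, 2, -2, 1, 0] : Fin 5 → ℚ) r' := by
    intro r'; rw [cpl_eq]; fin_cases r' <;> rfl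
  simp only [hd]
  refine Fin.cases ?_ (fun r' => ?_) r
  · fin_cases c <;> rfl
  · simp only [Matrix.of_apply, Fin.cases_succ]
    fin_cases r' <;> fin_cases c <;> simp <;> norm_num

lemma phi_V (i : ℕ) : phiC (V i) = (match nmN i with
    | Sum.inl i => tL i
    | Sum.inr (Sum.inl s) =>
        ellL s.val.inf s.val.sup /
          ((dL s.val.sup - dL s.val.inf) * (tL s.val.inf * tL s.val.sup))
    | Sum.inr (Sum.inr i) => conicL i / ∏ m ∈ Finset.univ.erase i, tL m) := by
  rw [phiC, V, aeval_X]

lemma phi0 : phiC (V 0) = tL 0 := (phi_V 0).trans rfl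
lemma phi5 : phiC (V 5) = tL 5 := (phi_V 5).trans rfl
lemma phi7 : phiC (V 7) = ellG xL dL 0 2 / ((dL 2 - dL 0) * (tL 0 * tL 2)) := (phi_V 7).trans rfl
lemma phi9 : phiC (V 9) = ellG xL dL 0 4 / ((dL 4 - dL 0) * (tL 0 * tL 4)) := (phi_V 9).trans rfl
lemma phi13 : phiC (V 13) = ellG xL dL 1 4 / ((dL 4 - dL 1) * (tL 1 * tL 4)) :=
  (phi_V 13).trans rfl
lemma phi16 : phiC (V 16) = ellG xL dL 2 4 / ((dL 4 - dL 2) * (tL 2 * tL 4)) :=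
  (phi_V 16).trans rfl
lemma phi18 : phiC (V 18) = ellG xL dL 3 4 / ((dL 4 - dL 3) * (tL 3 * tL 4)) :=
  (phi_V 18).trans rfl
lemma phi23 : phiC (V 23) = conG xL dL 2 / (tL 0 * (tL 1 * (tL 3 * (tL 4 * tL 5)))) := by
  refine (phi_V 23).trans ?_
  change conG xL dL 2 / ∏ m ∈ Finset.univ.erase (2 : Fin 6), tL m = _
  have : Finset.univ.erase (2 : Fin 6) = {0, 1, 3, 4, 5} := by decide
  rw [this]
  congr 1
  simp
lemma phi26 : phiC (V 26) = conG xL dL 5 / (tL 0 * (tL 1 * (tL 2 * (tL 3 * tL 4)))) := by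
  refine (phi_V 26).trans ?_
  change conG xL dL 5 / ∏ m ∈ Finset.univ.erase (5 : Fin 6), tL m = _
  have : Finset.univ.erase (5 : Fin 6) = {0, 1, 2, 3, 4} := by decide
  rw [this]
  congr 1
  simp

/-- The embedding of the base field in `LF`. -/
def psi : KK →+* LF := (algebraMap SRing LF).comp C

lemma phi_C (x : KK) : phiC (C x) = psi x := by
  have : phiC (C x) = algebraMap KK LF x := phiC.commutes x
  rw [this]
  exact IsScalarTower.algebraMap_apply KK SRing LF x

lemma psi_d (i : Fin 6) : psi (dK i) = dL i := rfl

lemma tL_ne (i : Fin 6) : tL i ≠ 0 := by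
  unfold tL
  rw [Ne, FaithfulSMul.algebraMap_eq_zero_iff SRing LF]
  exact X_ne_zero _

lemma dK_sub_ne {i j : Fin 6} (h : i ≠ j) : dK i - dK j ≠ 0 := by
  unfold dK
  rw [← map_sub, Ne, FaithfulSMul.algebraMap_eq_zero_iff]
  intro h0
  exact h (X_injective (sub_eq_zero.1 h0))

lemma dL_sub_ne {i j : Fin 6} (h : i ≠ j) : dL i - dL j ≠ 0 := by
  rw [← psi_d, ← psi_d, ← map_sub]
  exact (map_ne_zero psi).2 (dK_sub_ne h)

set_option maxHeartbeats 4000000 in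
lemma D3_num : D3 dq ≠ 0 := by
  have a5 : conG ![1, 0, 0] dq 5 = -103680 := by
    rw [con5]; simp [Matrix.det_succ_row_zero, Fin.sum_univ_succ, Fin.succAbove] <;> norm_num
  have a2 : conG ![1, 0, 0] dq 2 = 0 := by
    rw [con2]; simp [Matrix.det_succ_row_zero, Fin.sum_univ_succ, Fin.succAbove] <;> norm_num
  have b5 : conG ![0, 1, 0] dq 5 = 141120 := by
    rw [con5]; simp [Matrix.det_succ_row_zero, Fin.sum_univ_succ, Fin.succAbove] <;> norm_num
  have b2 : conG ![0, 1, 0] dq 2 = 1152 := by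
    rw [con2]; simp [Matrix.det_succ_row_zero, Fin.sum_univ_succ, Fin.succAbove] <;> norm_num
  have c5 : conG ![0, 0, 1] dq 5 = 2880 := by
    rw [con5]; simp [Matrix.det_succ_row_zero, Fin.sum_univ_succ, Fin.succAbove] <;> norm_num
  have c2 : conG ![0, 0, 1] dq 2 = 288 := by
    rw [con2]; simp [Matrix.det_succ_row_zero, Fin.sum_univ_succ, Fin.succAbove] <;> norm_num
  unfold D3 P1 P2 P3
  rw [a5, a2, b5, b2, c5, c2]
  simp [ellG, Matrix.det_fin_three, dq]
  norm_num

lemma rel_LF (x y : KK) (h : phiC (V 7 * V 13 * V 18 - C x * (V 0 * V 9 * V 26) -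
      C y * (V 5 * V 16 * V 23)) = 0) :
    psi ((dK 2 - dK 0) * (dK 4 - dK 1) * (dK 4 - dK 3))⁻¹ * P3 xL dL
      - psi (x * (dK 4 - dK 0)⁻¹) * P1 xL dL - psi (y * (dK 4 - dK 2)⁻¹) * P2 xL dL = 0 := by
  simp only [map_sub, map_mul, phi_C, phi0, phi5, phi7, phi9, phi13, phi16, phi18, phi23,
    phi26] at h
  simp only [map_inv₀, map_mul, map_sub, psi_d, P1, P2, P3]
  have t0 := tL_ne 0
  have t1 := tL_ne 1
  have t2 := tL_ne 2
  have t3 := tL_ne 3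
  have t4 := tL_ne 4
  have t5 := tL_ne 5
  have e1 : dL 2 - dL 0 ≠ 0 := dL_sub_ne (by decide)
  have e2 : dL 4 - dL 1 ≠ 0 := dL_sub_ne (by decide)
  have e3 : dL 4 - dL 3 ≠ 0 := dL_sub_ne (by decide)
  have e4 : dL 4 - dL 0 ≠ 0 := dL_sub_ne (by decide)
  have e5 : dL 4 - dL 2 ≠ 0 := dL_sub_ne (by decide)
  have h' := congrArg (fun z => z * (tL 0 * tL 1 * tL 2 * tL 3 * tL 4 ^ 2)) h
  simp only [zero_mul] at h'
  rw [← h']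
  generalize dL 2 - dL 0 = D1 at *
  generalize dL 4 - dL 1 = D2 at *
  generalize dL 4 - dL 3 = D3' at *
  generalize dL 4 - dL 0 = D4 at *
  generalize dL 4 - dL 2 = D5 at *
  generalize tL 0 = s0 at *
  generalize tL 1 = s1 at *
  generalize tL 2 = s2 at *
  generalize tL 3 = s3 at *
  generalize tL 4 = s4 at *
  generalize tL 5 = s5 at *
  clear h h'
  field_simp

lemma rel_K (x y : KK) (h : phiC (V 7 * V 13 * V 18 - C x * (V 0 * V 9 * V 26) -
      C y * (V 5 * V 16 * V 23)) = 0) (a b c : KK) :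
    ((dK 2 - dK 0) * (dK 4 - dK 1) * (dK 4 - dK 3))⁻¹ * P3 ![a, b, c] dK
      - (x * (dK 4 - dK 0)⁻¹) * P1 ![a, b, c] dK - (y * (dK 4 - dK 2)⁻¹) * P2 ![a, b, c] dK = 0 := by
  have h1 := rel_LF x y h
  generalize ((dK 2 - dK 0) * (dK 4 - dK 1) * (dK 4 - dK 3))⁻¹ = k3 at *
  generalize x * (dK 4 - dK 0)⁻¹ = k1 at *
  generalize y * (dK 4 - dK 2)⁻¹ = k2 at *
  let xS : Fin 3 → SRing := fun a => X (a.castLE (by omega))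
  let dS : Fin 6 → SRing := fun a => C (dK a)
  have h2 : algebraMap SRing LF (C k3 * P3 xS dS - C k1 * P1 xS dS - C k2 * P2 xS dS) = 0 := by
    rw [map_sub, map_sub, map_mul, map_mul, map_mul, map_P1, map_P2, map_P3]
    exact h1
  rw [FaithfulSMul.algebraMap_eq_zero_iff SRing LF] at h2
  have h3 := congrArg (eval (![a, b, c, 0, 0, 0, 0, 0, 0] : Fin 9 → KK)) h2
  rw [map_sub, map_sub, map_mul, map_mul, map_mul, map_P1, map_P2, map_P3, map_zero] at h3
  have ex : (fun i => eval (![a, b, c, 0, 0, 0, 0, 0, 0] : Fin 9 → KK) (xS i)) = ![a, b, c] := by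
    ext i
    simp only [xS, eval_X]
    fin_cases i <;> rfl
  have ed : (fun i => eval (![a, b, c, 0, 0, 0, 0, 0, 0] : Fin 9 → KK) (dS i)) = dK := by
    ext i
    simp only [dS, eval_C]
  rw [ex, ed, eval_C, eval_C, eval_C] at h3
  exact h3

lemma indep (x y : KK) : phiC (V 7 * V 13 * V 18 - C x * (V 0 * V 9 * V 26) -
      C y * (V 5 * V 16 * V 23)) ≠ 0 := by
  intro h
  have r1 := rel_K x y h 1 0 0
  have r2 := rel_K x y h 0 1 0
  have r3 := rel_K x y h 0 0 1
  have hk : ((dK 2 - dK 0) * (dK 4 - dK 1) * (dK 4 - dK 3))⁻¹ ≠ 0 :=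
    inv_ne_zero (mul_ne_zero (mul_ne_zero (dK_sub_ne (by decide)) (dK_sub_ne (by decide)))
      (dK_sub_ne (by decide)))
  generalize ((dK 2 - dK 0) * (dK 4 - dK 1) * (dK 4 - dK 3))⁻¹ = k3 at *
  generalize x * (dK 4 - dK 0)⁻¹ = k1 at *
  generalize y * (dK 4 - dK 2)⁻¹ = k2 at *
  have hD : k3 * D3 dK = 0 := by
    unfold D3
    linear_combination
      (P1 ![0, 1, 0] dK * P2 ![0, 0, 1] dK - P2 ![0, 1, 0] dK * P1 ![0, 0, 1] dK) * r1
      - (P1 ![1, 0, 0] dK * P2 ![0, 0, 1] dK - P2 ![1, 0, 0] dK * P1 ![0, 0, 1] dK) * r2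
      + (P1 ![1, 0, 0] dK * P2 ![0, 1, 0] dK - P2 ![1, 0, 0] dK * P1 ![0, 1, 0] dK) * r3
  have hD' : D3 dK = 0 := (mul_eq_zero.1 hD).resolve_left hk
  have hR : algebraMap (MvPolynomial (Fin 6) ℚ) KK (D3 X) = 0 := by
    rw [map_D3]; exact hD'
  rw [FaithfulSMul.algebraMap_eq_zero_iff] at hR
  have hq := congrArg (eval dq) hR
  rw [map_D3, map_zero] at hq
  simp only [eval_X] at hq
  exact D3_num hq

/-- let `G` be the set of the 270 trinomial generators of the
Cox ideal `I_X` (the ten trinomials `T_{1,jkl}` together with their 260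
translates under the Weyl group `W(E₆)`; these are pinned down, up to a
nonzero scalar on each generator, by the hypotheses below, which characterize
them as the 270 trinomial relations supported on three reducible members of a
conic bundle class).  Then for the weight vector `w` of the paper: (i) the
initial form of each of the 270 generators is not a monomial, and (ii) the
monomial `E₆·F₅₆·G₆` lies in the initial ideal `in_w(I_X)` of the ideal
`I_X` generated by `G`.  Hence `w` lies in the tropical prevariety of the
270 generators but not in the tropical variety of `I_X`: the 270 trinomial
generators are not a tropical basis. -/
theorem stmt_5 (G : Finset (MvPolynomial CVar KK))
    (hcard : G.card = 270)
    (hbase : ∀ j k l : Fin 6, 0 < j → j < k → k < l → T 0 j k l ∈ G)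
    (hker : ∀ g ∈ G, phiC g = 0)
    (hsupp : ∀ g ∈ G, g.support.card = 3)
    (hquad : ∀ g ∈ G, ∀ m ∈ g.support,
      ∃ u v : CVar, u ≠ v ∧ m = Finsupp.single u 1 + Finsupp.single v 1)
    (hdeg : ∀ g ∈ G, ∀ m ∈ g.support, ∀ m' ∈ g.support, picDegM m = picDegM m')
    (hdistinct : ∀ g ∈ G, ∀ g' ∈ G, g ≠ g' → g.support ≠ g'.support) :
    (∀ f ∈ G, ¬ IsMonomial (initialForm wCox f)) ∧
    Ev 5 * Fv 4 5 * Gv 5 ∈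
      initialIdeal wCox (Ideal.span (G : Set (MvPolynomial CVar KK))) := by
  refine ⟨fun f hf => part_one (hsupp f hf) (hquad f hf) (hdeg f hf), ?_⟩
  have h := part_two G hcard hker hsupp hquad hdeg hdistinct indep
  have hE : Ev 5 = V 5 := rfl
  have hF : Fv 4 5 = V 20 := by
    rw [Fv, dif_pos (by decide)]; rfl
  have hG : Gv 5 = V 26 := rfl
  rw [hE, hF, hG]
  exact h

end
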